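/- (Proved within Theorem 4) It is decidable, given a finite set B of terms in CQ normal form and a shift S, whether S is extenuative for B, i.e. whether S is bad for B and for each natural number n there exists a finite sequence F_1,…,F_k of members of B such that the CQ normal form of S*F_1*…*F_k has length at least n. -/

import Mathlib

/-- Terms of the free (quasi-)Cartesian monoid: constants `I, L, R`,
composition `comp` (written `*` in the paper) and pairing `pair`. -/
inductive Term : Type
  | I : Term
  | L : Term
  | R : Term
  | comp : Term → Term → Term
  | pair : Term → Term → Term
  deriving DecidableEq

open Term

/-- The rewrite rules (1)-(7), indexed by their number. -/
inductive Rule : ℕ → Term → Term → Prop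
  | r1 (x y : Term) : Rule 1 (comp L (pair x y)) x
  | r2 (x y : Term) : Rule 2 (comp R (pair x y)) y
  | r3 (x y z : Term) : Rule 3 (comp (pair x y) z) (pair (comp x z) (comp y z))
  | r4 (x : Term) : Rule 4 (comp I x) x
  | r5 (x : Term) : Rule 5 (comp x I) x
  | r6 (x : Term) : Rule 6 (pair (comp L x) (comp R x)) x
  | r7 : Rule 7 (pair L R) I

/-- The congruence generated by associativity of `comp`. -/
inductive AssocEq : Term → Term → Prop
  | assoc (a b c : Term) : AssocEq (comp (comp a b) c) (comp a (comp b c))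
  | refl (a : Term) : AssocEq a a
  | symm {a b : Term} : AssocEq a b → AssocEq b a
  | trans {a b c : Term} : AssocEq a b → AssocEq b c → AssocEq a c
  | comp_congr {a a' b b' : Term} :
      AssocEq a a' → AssocEq b b' → AssocEq (comp a b) (comp a' b')
  | pair_congr {a a' b b' : Term} :
      AssocEq a a' → AssocEq b b' → AssocEq (pair a b) (pair a' b')

/-- One-step rewriting by a rule whose index lies in `J`,
closed under replacement of subterms (monotone closure). -/
inductive Step (J : Set ℕ) : Term → Term → Prop
  | rule {n : ℕ} {x y : Term} : n ∈ J → Rule n x y → Step J x y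
  | comp_left {a a' b : Term} : Step J a a' → Step J (comp a b) (comp a' b)
  | comp_right {a b b' : Term} : Step J b b' → Step J (comp a b) (comp a b')
  | pair_left {a a' b : Term} : Step J a a' → Step J (pair a b) (pair a' b)
  | pair_right {a b b' : Term} : Step J b b' → Step J (pair a b) (pair a b')

/-- One-step rewriting modulo associativity. -/
def StepA (J : Set ℕ) (a b : Term) : Prop :=
  ∃ a' b', AssocEq a a' ∧ Step J a' b' ∧ AssocEq b' b

/-- Many-step rewriting `↠_J`: the monotone reflexive transitive closure of
one-step rewriting by the rules in `J`, modulo associativity. -/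
def Red (J : Set ℕ) (a b : Term) : Prop :=
  ∃ c, Relation.ReflTransGen (StepA J) a c ∧ AssocEq c b

/-- `a` is in normal form w.r.t. the rules in `J` (modulo associativity). -/
def NF (J : Set ℕ) (a : Term) : Prop := ∀ b, ¬ StepA J a b

/-- Rules (1)-(7). -/
def rules17 : Set ℕ := {n | 1 ≤ n ∧ n ≤ 7}
/-- Rules (1)-(5). -/
def rules15 : Set ℕ := {n | 1 ≤ n ∧ n ≤ 5}
/-- Rules (1)-(4). -/
def rules14 : Set ℕ := {n | 1 ≤ n ∧ n ≤ 4}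
/-- Rules (5), (6), (7). -/
def rules567 : Set ℕ := {5, 6, 7}

/-- The congruence `=_CM` generated by the Cartesian monoid axioms (i)-(iv)
and the monoid axioms for `comp` with unit `I`. -/
inductive CMEq : Term → Term → Prop
  | proj_left (f g : Term) : CMEq (comp L (pair f g)) f
  | proj_right (f g : Term) : CMEq (comp R (pair f g)) g
  | lift (f g h : Term) : CMEq (comp (pair f g) h) (pair (comp f h) (comp g h))
  | surj : CMEq (pair L R) I
  | assoc (a b c : Term) : CMEq (comp (comp a b) c) (comp a (comp b c))
  | one_mul (a : Term) : CMEq (comp I a) a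
  | mul_one (a : Term) : CMEq (comp a I) a
  | refl (a : Term) : CMEq a a
  | symm {a b : Term} : CMEq a b → CMEq b a
  | trans {a b c : Term} : CMEq a b → CMEq b c → CMEq a c
  | comp_congr {a a' b b' : Term} :
      CMEq a a' → CMEq b b' → CMEq (comp a b) (comp a' b')
  | pair_congr {a a' b b' : Term} :
      CMEq a a' → CMEq b b' → CMEq (pair a b) (pair a' b')

/-- The congruence `=_CQ` generated by the axioms (i)-(iii)
and the monoid axioms (no surjectivity `⟨L,R⟩ = I`). -/
inductive CQEq : Term → Term → Prop
  | proj_left (f g : Term) : CQEq (comp L (pair f g)) f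
  | proj_right (f g : Term) : CQEq (comp R (pair f g)) g
  | lift (f g h : Term) : CQEq (comp (pair f g) h) (pair (comp f h) (comp g h))
  | assoc (a b c : Term) : CQEq (comp (comp a b) c) (comp a (comp b c))
  | one_mul (a : Term) : CQEq (comp I a) a
  | mul_one (a : Term) : CQEq (comp a I) a
  | refl (a : Term) : CQEq a a
  | symm {a b : Term} : CQEq a b → CQEq b a
  | trans {a b c : Term} : CQEq a b → CQEq b c → CQEq a c
  | comp_congr {a a' b b' : Term} :
      CQEq a a' → CQEq b b' → CQEq (comp a b) (comp a' b')
  | pair_congr {a a' b b' : Term} :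
      CQEq a a' → CQEq b b' → CQEq (pair a b) (pair a' b')

/-- An injective numerical encoding of terms, used to state computability. -/
def encodeTerm : Term → ℕ
  | I => 0
  | L => 1
  | R => 2
  | comp a b => 2 * Nat.pair (encodeTerm a) (encodeTerm b) + 3
  | pair a b => 2 * Nat.pair (encodeTerm a) (encodeTerm b) + 4

/-- A numerical encoding of finite lists of terms. -/
def encodeTermList : List Term → ℕ
  | [] => 0
  | a :: l => Nat.pair (encodeTerm a) (encodeTermList l) + 1

/-- The product of a list of terms (with `I` as the empty product). -/
def listProd : List Term → Term
  | [] => I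
  | a :: l => comp a (listProd l)

/-- `=_CQ` as a setoid. -/
def cqSetoid : Setoid Term :=
  ⟨CQEq, ⟨fun a => CQEq.refl a, fun h => h.symm, fun h₁ h₂ => h₁.trans h₂⟩⟩

/-- The free categorical quasiproduct monoid `CQ = T / =_CQ`. -/
def CQ : Type := Quotient cqSetoid

/-- `=_CM` as a setoid. -/
def cmSetoid : Setoid Term :=
  ⟨CMEq, ⟨fun a => CMEq.refl a, fun h => h.symm, fun h₁ h₂ => h₁.trans h₂⟩⟩

/-- The free Cartesian monoid `CM = T / =_CM`. -/
def CM : Type := Quotient cmSetoid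

/-- The submonoid of `CQ` generated by (the classes of) the members of `B`,
as a set of elements of `CQ`. -/
def genSubmonoidCQ (B : List Term) : Set CQ :=
  {x | ∃ l : List Term, (∀ t ∈ l, t ∈ B) ∧ Quotient.mk cqSetoid (listProd l) = x}

/-- The submonoid of `CM` generated by (the classes of) the members of `B`,
as a set of elements of `CM`. -/
def genSubmonoidCM (B : List Term) : Set CM :=
  {x | ∃ l : List Term, (∀ t ∈ l, t ∈ B) ∧ Quotient.mk cmSetoid (listProd l) = x}

/-- A shift: a product (under `comp`) of copies of `L` and `R`,
with `I` as the empty product. -/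
inductive IsShift : Term → Prop
  | unit : IsShift I
  | left : IsShift L
  | right : IsShift R
  | comp {s t : Term} : IsShift s → IsShift t → IsShift (comp s t)

/-- The CQ normal form (normal form w.r.t. rules (1)-(5)) of `X` is a shift. -/
def nfIsShift (X : Term) : Prop :=
  ∃ N, Red rules15 X N ∧ NF rules15 N ∧ IsShift N

/-- The product `F_0 * ⋯ * F_{n-1}` of the first `n` values of a sequence. -/
def prodTake (f : ℕ → Term) (n : ℕ) : Term := listProd ((List.range n).map f)

/-- `B` covers Cantor space: there is an infinite sequence of members of `B`
such that for each shift `S` some finite initial product composed with `S`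
has a CQ normal form that is not a shift. -/
def Covers (B : List Term) : Prop :=
  ∃ f : ℕ → Term, (∀ n, f n ∈ B) ∧
    ∀ S, IsShift S → ∃ n, ¬ nfIsShift (comp S (prodTake f n))

/-- The shift `S` is bad for `B`: for every finite sequence of members of `B`,
the CQ normal form of `S*F_1*⋯*F_n` is a shift. -/
def BadFor (B : List Term) (S : Term) : Prop :=
  ∀ l : List Term, (∀ t ∈ l, t ∈ B) → nfIsShift (comp S (listProd l))

/-- The length of a shift: the number of occurrences of `L` and `R`. -/
def lenLR : Term → ℕ
  | I => 0
  | L => 1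
  | R => 1
  | comp a b => lenLR a + lenLR b
  | pair a b => lenLR a + lenLR b

/-- `S` is extenuative for `B`: it is bad for `B` and the CQ normal forms of
`S*F_1*⋯*F_k` (for `F_i` in `B`) have unbounded length. -/
def Extenuative (B : List Term) (S : Term) : Prop :=
  BadFor B S ∧ ∀ n : ℕ, ∃ l : List Term, (∀ t ∈ l, t ∈ B) ∧
    ∃ N, Red rules15 (comp S (listProd l)) N ∧ NF rules15 N ∧ n ≤ lenLR N

/-- A term represents a right invertible element of CM. -/
def RightInvCM (F : Term) : Prop := ∃ G, CMEq (comp F G) I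


/-! ### Rewriting of words at their beginning -/

/-- One rewriting step. -/
def PStep (Rs : List (List Bool × List Bool)) (x y : List Bool) : Prop :=
  ∃ p v r, (p, v) ∈ Rs ∧ x = p ++ r ∧ y = v ++ r

/-- `n` rewriting steps. -/
def PStepN (Rs : List (List Bool × List Bool)) : ℕ → List Bool → List Bool → Prop
  | 0, x, y => x = y
  | n + 1, x, y => ∃ z, PStep Rs x z ∧ PStepN Rs n z y

/-- Reachability. -/
def PReach (Rs : List (List Bool × List Bool)) (x y : List Bool) : Prop := ∃ n, PStepN Rs n x y

theorem PStep.ctx {Rs x y} (h : PStep Rs x y) (z : List Bool) : PStep Rs (x ++ z) (y ++ z) := by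
  obtain ⟨p, v, r, h, rfl, rfl⟩ := h
  exact ⟨p, v, r ++ z, h, by simp, by simp⟩

theorem PStepN.ctx {Rs n x y} (h : PStepN Rs n x y) (z : List Bool) :
    PStepN Rs n (x ++ z) (y ++ z) := by
  induction n generalizing x with
  | zero => cases h; rfl
  | succ n ih =>
    obtain ⟨w, h1, h2⟩ := h
    exact ⟨_, h1.ctx z, ih h2⟩

theorem PStepN.trans {Rs n m x y z} (h : PStepN Rs n x y) (h' : PStepN Rs m y z) :
    PStepN Rs (n + m) x z := by
  induction n generalizing x with
  | zero => cases h; simpa using h'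
  | succ n ih =>
    obtain ⟨w, h1, h2⟩ := h
    rw [Nat.succ_add]
    exact ⟨_, h1, ih h2⟩

theorem PReach.refl {Rs} (x) : PReach Rs x x := ⟨0, rfl⟩
theorem PReach.trans {Rs x y z} (h : PReach Rs x y) (h' : PReach Rs y z) : PReach Rs x z := by
  obtain ⟨n, h⟩ := h
  obtain ⟨m, h'⟩ := h'
  exact ⟨_, h.trans h'⟩
theorem PReach.ctx {Rs x y} (h : PReach Rs x y) (z) : PReach Rs (x ++ z) (y ++ z) := by
  obtain ⟨n, h⟩ := h
  exact ⟨_, h.ctx z⟩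
theorem PReach.single {Rs x y} (h : PStep Rs x y) : PReach Rs x y := ⟨1, _, h, rfl⟩

theorem PReach.induct {Rs} {s : List Bool} {P : List Bool → Prop} (h0 : P s)
    (hs : ∀ x y, PReach Rs s x → PStep Rs x y → P x → P y) {w} (h : PReach Rs s w) : P w := by
  obtain ⟨n, h⟩ := h
  have key : ∀ n x, PReach Rs s x → P x → PStepN Rs n x w → P w := by
    intro n
    induction n with
    | zero => intro x _ hx h; cases h; exact hx
    | succ n ih =>
      rintro x hx px ⟨z, h1, h2⟩
      exact ih z (hx.trans (.single h1)) (hs _ _ hx h1 px) h2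
  exact key n s (.refl _) h0 h

/-- Splitting a derivation according to whether the bottom part is touched. -/
theorem PStepN.split {Rs} {n : ℕ} {u r y : List Bool} (h : PStepN Rs n (u ++ r) y) :
    (∃ y', PStepN Rs n u y' ∧ y = y' ++ r) ∨
    (∃ i j t r1 r2 v, r = r1 ++ r2 ∧ PStepN Rs i u t ∧ (t ++ r1, v) ∈ Rs ∧
      PStepN Rs j (v ++ r2) y ∧ n = i + 1 + j) := by
  induction n generalizing u with
  | zero => cases h; exact .inl ⟨u, rfl, rfl⟩
  | succ n ih =>
    obtain ⟨z, ⟨p, v, r0, hp, h1, rfl⟩, h2⟩ := h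
    rcases List.append_eq_append_iff.1 h1 with ⟨c, rfl, rfl⟩ | ⟨c, rfl, rfl⟩
    · exact .inr ⟨0, n, u, c, r0, v, rfl, rfl, hp, h2, by omega⟩
    · rw [← List.append_assoc] at h2
      have hst : PStep Rs (p ++ c) (v ++ c) := ⟨p, v, c, hp, rfl, rfl⟩
      rcases ih h2 with ⟨y', h3, rfl⟩ | ⟨i, j, t, r1, r2, v', rfl, h3, h4, h5, rfl⟩
      · exact .inl ⟨y', ⟨_, hst, h3⟩, rfl⟩
      · exact .inr ⟨i + 1, j, t, r1, r2, v', rfl, ⟨_, hst, h3⟩, h4, h5, by omega⟩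

/-- A relation on short words closed under the obvious operations contains reachability. -/
theorem closed_contains {Rs} {K : ℕ} {D : List Bool → List Bool → Prop}
    (hK : ∀ p v, (p, v) ∈ Rs → p.length ≤ K ∧ v.length ≤ K)
    (hrefl : ∀ x, D x x) (hrule : ∀ p v, (p, v) ∈ Rs → D p v)
    (hctx : ∀ x y z, D x y → D (x ++ z) (y ++ z))
    (htrans : ∀ x y z : List Bool, x.length ≤ K → y.length ≤ K → z.length ≤ K →
      D x y → D y z → D x z) :
    ∀ n u r y x0, u.length ≤ K → y.length ≤ K → (x0 ++ r).length ≤ K → D x0 u →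
      PStepN Rs n (u ++ r) y → D (x0 ++ r) y := by
  intro n
  induction n using Nat.strong_induction_on with
  | _ n ih =>
    intro u r y x0 hu hy hx0 hD h
    have hx0K : x0.length ≤ K := by simp at hx0; omega
    -- derivations of length at most `n` out of `u`
    have aux : ∀ i ≤ n, ∀ t : List Bool, t.length ≤ K → PStepN Rs i u t → D x0 t := by
      intro i hi t ht hst
      cases i with
      | zero => cases hst; exact hD
      | succ i =>
        obtain ⟨z, ⟨p, v, r0, hp, rfl, rfl⟩, h2⟩ := hst
        have := ih i (by omega) v r0 t p (hK _ _ hp).2 ht hu (hrule _ _ hp) h2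
        exact htrans _ _ _ hx0K hu ht hD this
    rcases h.split with ⟨y', h3, rfl⟩ | ⟨i, j, t, r1, r2, v, rfl, h3, h4, h5, rfl⟩
    · exact hctx _ _ _ (aux n le_rfl y' (by simp at hy; omega) h3)
    · have hv := hK _ _ h4
      have h6 := hctx _ _ r1 (aux i (by omega) t (by have := hv.1; simp at this; omega) h3)
      have h7 : D (x0 ++ r1) v :=
        htrans _ _ _ (by simp at hx0 ⊢; omega) hv.1 hv.2 h6 (hrule _ _ h4)
      rw [← List.append_assoc] at hx0 ⊢
      exact ih j (by omega) v r2 y (x0 ++ r1) hv.2 hy hx0 h7 h5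

theorem pump {Rs} {K : ℕ} {s : List Bool} (hK : ∀ p v, (p, v) ∈ Rs → v.length ≤ K)
    (hs : s.length ≤ K) (hunb : ∀ n, ∃ w, PReach Rs s w ∧ n ≤ w.length) :
    ∃ a q r, a.length ≤ K ∧ PReach Rs s (a ++ r) ∧ PReach Rs a (a ++ q) ∧ q ≠ [] := by
  have inv : ∀ w, PReach Rs s w → ∃ a : List Bool → List Bool,
      (∀ x y, w = x ++ y → (a y).length ≤ K ∧ PReach Rs s (a y ++ y) ∧ PReach Rs (a y) x) ∧
      (∀ x z y, w = x ++ (z ++ y) → PReach Rs (a y) (a (z ++ y) ++ z)) := by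
    intro w hw
    refine PReach.induct (P := fun w => ∃ a : List Bool → List Bool,
      (∀ x y, w = x ++ y → (a y).length ≤ K ∧ PReach Rs s (a y ++ y) ∧ PReach Rs (a y) x) ∧
      (∀ x z y, w = x ++ (z ++ y) → PReach Rs (a y) (a (z ++ y) ++ z))) ?_ ?_ hw
    · have ht : ∀ x y, s = x ++ y → s.take (s.length - y.length) = x := by
        rintro x y rfl; simp
      refine ⟨fun y => s.take (s.length - y.length), ?_, ?_⟩
      · intro x y h
        simp only [ht x y h]
        refine ⟨?_, ?_, .refl _⟩
        · rw [h] at hs; simp at hs; omega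
        · rw [h]; exact .refl _
      · intro x z y h
        simp only [ht x _ h, ht (x ++ z) y (by simpa using h)]
        exact .refl _
    · rintro w w' hw ⟨p, v, r, hp, rfl, rfl⟩ ⟨a, ha1, ha2⟩
      have hreach : PReach Rs s (v ++ r) := hw.trans (.single ⟨p, v, r, hp, rfl, rfl⟩)
      have ht : ∀ x y, v ++ r = x ++ y → (v ++ r).take ((v ++ r).length - y.length) = x := by
        intro x y h; rw [h]; simp
      refine ⟨fun y => if y.length ≤ r.length then a y
        else (v ++ r).take ((v ++ r).length - y.length), ?_, ?_⟩
      · intro x y h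
        by_cases hy : y.length ≤ r.length
        · simp only [hy, if_true]
          obtain ⟨c, rfl, rfl⟩ : ∃ c, x = v ++ c ∧ r = c ++ y := by
            rcases List.append_eq_append_iff.1 h with ⟨c, h1, h2⟩ | ⟨c, h1, h2⟩
            · exact ⟨c, h1, h2⟩
            · have : c = [] := by
                apply List.eq_nil_of_length_eq_zero
                rw [h2] at hy; simp at hy; simp [hy]
              subst this
              exact ⟨[], by simpa using h1.symm, by simpa using h2.symm⟩
          obtain ⟨h1, h2, h3⟩ := ha1 (p ++ c) y (by simp)
          exact ⟨h1, h2, h3.trans (.single ⟨p, v, c, hp, rfl, rfl⟩)⟩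
        · simp only [hy, if_false, ht x y h]
          refine ⟨?_, by rwa [← h], .refl _⟩
          have := hK _ _ hp
          have h2 := congrArg List.length h
          simp at h2; omega
      · intro x z y h
        by_cases hy : y.length ≤ r.length
        · by_cases hzy : (z ++ y).length ≤ r.length
          · simp only [hy, hzy, if_true]
            obtain ⟨c, rfl, rfl⟩ : ∃ c, x = v ++ c ∧ r = c ++ (z ++ y) := by
              rcases List.append_eq_append_iff.1 h with ⟨c, h1, h2⟩ | ⟨c, h1, h2⟩
              · exact ⟨c, h1, h2⟩
              · have : c = [] := by
                  apply List.eq_nil_of_length_eq_zero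
                  rw [h2] at hzy; simp at hzy; simp [hzy]
                subst this
                exact ⟨[], by simpa using h1.symm, by simpa using h2.symm⟩
            exact ha2 (p ++ c) z y (by simp)
          · simp only [hy, hzy, if_true, if_false, ht x _ h]
            obtain ⟨c, h1, rfl⟩ : ∃ c, x ++ z = v ++ c ∧ r = c ++ y := by
              rcases List.append_eq_append_iff.1
                (show v ++ r = (x ++ z) ++ y by simpa using h) with ⟨c, h1, h2⟩ | ⟨c, h1, h2⟩
              · exact ⟨c, h1, h2⟩
              · have : c = [] := by
                  apply List.eq_nil_of_length_eq_zero
                  rw [h2] at hy; simp at hy; simp [hy]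
                subst this
                exact ⟨[], by simpa using h1.symm, by simpa using h2.symm⟩
            obtain ⟨-, -, h3⟩ := ha1 (p ++ c) y (by simp)
            rw [h1]
            exact h3.trans (.single ⟨p, v, c, hp, rfl, rfl⟩)
        · have hzy : ¬ (z ++ y).length ≤ r.length := by simp; omega
          simp only [hy, hzy, if_false, ht x _ h, ht (x ++ z) y (by simpa using h)]
          exact .refl _
  have hfin : {l : List Bool | l.length ≤ K}.Finite := List.finite_length_le Bool K
  obtain ⟨w, hw, hlen⟩ := hunb hfin.toFinset.card
  obtain ⟨a, ha1, ha2⟩ := inv w hw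
  have hsplit : ∀ k, w = w.take (w.length - k) ++ w.drop (w.length - k) := fun k => by simp
  obtain ⟨i, hi, j, hj, hij, heq⟩ := Finset.exists_ne_map_eq_of_card_lt_of_maps_to
    (s := Finset.range (w.length + 1)) (t := hfin.toFinset)
    (f := fun k => a (w.drop (w.length - k))) (by simp; omega)
    (fun k hk => by simpa using (ha1 _ _ (hsplit k)).1)
  have main : ∀ i j, i < j → j ≤ w.length →
      a (w.drop (w.length - i)) = a (w.drop (w.length - j)) →
      ∃ a q r, a.length ≤ K ∧ PReach Rs s (a ++ r) ∧ PReach Rs a (a ++ q) ∧ q ≠ [] := by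
    intro i j hij hj heq
    obtain ⟨h1, h2, -⟩ := ha1 _ _ (hsplit i)
    have hz : w.drop (w.length - j) =
        (w.drop (w.length - j)).take (j - i) ++ w.drop (w.length - i) := by
      conv_lhs => rw [← List.take_append_drop (j - i) (w.drop (w.length - j))]
      rw [List.drop_drop]
      congr 2; omega
    have h4 := ha2 (w.take (w.length - j)) ((w.drop (w.length - j)).take (j - i))
      (w.drop (w.length - i)) (by rw [← hz]; exact hsplit j)
    rw [← hz, ← heq] at h4
    refine ⟨_, _, _, h1, h2, h4, ?_⟩
    intro h
    have := congrArg List.length h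
    simp at this
    omega
  simp at hi hj
  rcases lt_or_gt_of_ne hij with h | h
  · exact main i j h (by omega) heq
  · exact main j i h (by omega) heq.symm

theorem pump_conv {Rs} {s a q r : List Bool} (h1 : PReach Rs s (a ++ r))
    (h2 : PReach Rs a (a ++ q)) (hq : q ≠ []) (n : ℕ) :
    ∃ w, PReach Rs s w ∧ n ≤ w.length := by
  suffices h : ∃ r', PReach Rs s (a ++ r') ∧ n ≤ r'.length by
    obtain ⟨r', h, h'⟩ := h
    exact ⟨_, h, by simp; omega⟩
  induction n with
  | zero => exact ⟨r, h1, by simp⟩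
  | succ n ih =>
    obtain ⟨r', h, h'⟩ := ih
    refine ⟨q ++ r', ?_, ?_⟩
    · rw [← List.append_assoc]; exact h.trans (h2.ctx r')
    · have := List.length_pos_iff.2 hq
      simp; omega

/-- The problem on words. -/
def WExt (Rs : List (List Bool × List Bool)) (Is : List (List Bool)) (s : List Bool) : Prop :=
  (∀ w, PReach Rs s w → w ∉ Is) ∧ ∀ n, ∃ w, PReach Rs s w ∧ n ≤ w.length

/-- Successors of a word. -/
def succs (Rs : List (List Bool × List Bool)) (w : List Bool) : List (List Bool) :=
  Rs.flatMap fun pv => if pv.1 ++ w.drop pv.1.length = w then [pv.2 ++ w.drop pv.1.length] else []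

theorem mem_succs {Rs w y} : y ∈ succs Rs w ↔ PStep Rs w y := by
  simp only [succs, List.mem_flatMap, PStep, Prod.exists]
  constructor
  · rintro ⟨p, v, h, hy⟩
    split_ifs at hy with hp
    · simp at hy; exact ⟨p, v, _, h, hp.symm, hy⟩
    · simp at hy
  · rintro ⟨p, v, r, h, rfl, rfl⟩
    exact ⟨p, v, h, by simp⟩

/-- Words reachable in at most `n` steps. -/
def reachN (Rs : List (List Bool × List Bool)) (s : List Bool) (n : ℕ) : List (List Bool) :=
  (fun X => s :: X.flatMap (succs Rs))^[n] [s]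

theorem mem_reachN {Rs s n y} : y ∈ reachN Rs s n ↔ ∃ i ≤ n, PStepN Rs i s y := by
  induction n generalizing y with
  | zero => simp [reachN, PStepN, eq_comm]
  | succ n ih =>
    have : y ∈ reachN Rs s (n + 1) ↔ y = s ∨ ∃ z ∈ reachN Rs s n, PStep Rs z y := by
      simp only [reachN, Function.iterate_succ', Function.comp, List.mem_cons, List.mem_flatMap,
        mem_succs]
    rw [this]
    constructor
    · rintro (rfl | ⟨z, hz, h⟩)
      · exact ⟨0, by omega, rfl⟩
      · obtain ⟨i, hi, h'⟩ := ih.1 hz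
        exact ⟨i + 1, by omega, h'.trans (m := 1) ⟨_, h, rfl⟩⟩
    · rintro ⟨i, hi, h⟩
      cases i with
      | zero => exact .inl h.symm
      | succ i =>
        right
        have tail : ∀ i x, PStepN Rs (i + 1) x y → ∃ z, PStepN Rs i x z ∧ PStep Rs z y := by
          intro i
          induction i with
          | zero => rintro x ⟨z, h1, h2⟩; cases h2; exact ⟨x, rfl, h1⟩
          | succ i ih =>
            rintro x ⟨z, h1, h2⟩
            obtain ⟨z', h3, h4⟩ := ih z h2
            exact ⟨z', ⟨z, h1, h3⟩, h4⟩
        obtain ⟨z, h1, h2⟩ := tail i s h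
        exact ⟨z, ih.2 ⟨i, by omega, h1⟩, h2⟩

theorem reach_of_mem {Rs s n y} (h : y ∈ reachN Rs s n) : PReach Rs s y := by
  obtain ⟨i, -, h⟩ := mem_reachN.1 h
  exact ⟨i, h⟩

theorem reachN_mono {Rs s n m y} (hnm : n ≤ m) (h : y ∈ reachN Rs s n) : y ∈ reachN Rs s m := by
  obtain ⟨i, hi, h⟩ := mem_reachN.1 h
  exact mem_reachN.2 ⟨i, by omega, h⟩

theorem reach_eventually {Rs s y} (h : PReach Rs s y) :
    ∀ᶠ n in Filter.atTop, y ∈ reachN Rs s n := by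
  obtain ⟨i, h⟩ := h
  filter_upwards [Filter.eventually_ge_atTop i] with n hn
  exact mem_reachN.2 ⟨i, hn, h⟩

/-- All words of length at most `k`. -/
def wordsLE (k : ℕ) : List (List Bool) :=
  (fun X => [] :: (X.map (List.cons true) ++ X.map (List.cons false)))^[k] [[]]

theorem mem_wordsLE {k w} : w ∈ wordsLE k ↔ w.length ≤ k := by
  induction k generalizing w with
  | zero => simp [wordsLE]
  | succ k ih =>
    have : w ∈ wordsLE (k + 1) ↔ w = [] ∨ (∃ z ∈ wordsLE k, true :: z = w) ∨
        (∃ z ∈ wordsLE k, false :: z = w) := by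
      simp only [wordsLE, Function.iterate_succ', Function.comp, List.mem_cons, List.mem_append,
        List.mem_map]
    rw [this]
    cases w with
    | nil => simp
    | cons b w => cases b <;> simp [ih]

/-- The bound on all lengths. -/
def bnd (Rs : List (List Bool × List Bool)) (Is : List (List Bool)) (s : List Bool) : ℕ :=
  (Rs.flatMap (fun pv => pv.1 ++ pv.2) ++ (Is.flatMap id ++ s)).length

theorem length_le_flatMap {α β : Type} {l : List α} {f : α → List β} {a : α} (h : a ∈ l) :
    (f a).length ≤ (l.flatMap f).length := by
  induction l with
  | nil => simp at h
  | cons b l ih =>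
    rcases List.mem_cons.1 h with rfl | h
    · simp
    · have := ih h
      simp only [List.flatMap_cons, List.length_append]; omega

/-- Positive certificate. -/
def chkPos (Rs : List (List Bool × List Bool)) (Is : List (List Bool)) (s : List Bool) (n : ℕ) :
    Prop :=
  1 ≤ n ∧ (∀ x ∈ wordsLE (bnd Rs Is s), ∀ y ∈ wordsLE (bnd Rs Is s),
    y ∈ reachN Rs x n → ∀ z ∈ wordsLE (bnd Rs Is s), z ∈ reachN Rs y n → z ∈ reachN Rs x n) ∧
  (∀ i ∈ Is, i ∉ reachN Rs s n) ∧
  ∃ a ∈ wordsLE (bnd Rs Is s), (∃ w ∈ reachN Rs s n, a ++ w.drop a.length = w) ∧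
    ∃ y ∈ reachN Rs a n, a ++ y.drop a.length = y ∧ a.length < y.length

/-- Negative certificate. -/
def chkNeg (Rs : List (List Bool × List Bool)) (Is : List (List Bool)) (s : List Bool) (n : ℕ) :
    Prop :=
  (∃ i ∈ Is, i ∈ reachN Rs s n) ∨
    ∀ w ∈ reachN Rs s n, ∀ y ∈ succs Rs w, y ∈ reachN Rs s n

theorem bnd_rule {Rs Is s p v} (h : (p, v) ∈ Rs) : p.length ≤ bnd Rs Is s ∧
    v.length ≤ bnd Rs Is s := by
  have := length_le_flatMap (f := fun pv : List Bool × List Bool => pv.1 ++ pv.2) h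
  simp only [bnd, List.length_append] at this ⊢
  omega

theorem bnd_int {Rs Is s} {i : List Bool} (h : i ∈ Is) : i.length ≤ bnd Rs Is s := by
  have := length_le_flatMap (f := id) h
  simp only [bnd, List.length_append, id] at this ⊢
  omega

theorem bnd_s {Rs Is} {s : List Bool} : s.length ≤ bnd Rs Is s := by
  simp only [bnd, List.length_append]
  omega

theorem chkPos_sound {Rs Is s n} (h : chkPos Rs Is s n) : WExt Rs Is s := by
  obtain ⟨hn, hcl, hI, a, ha, ⟨w, hw, haw⟩, y, hy, hay, hlt⟩ := h
  constructor
  · intro w ⟨m, hw⟩ hwI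
    refine hI w hwI ?_
    have := closed_contains (Rs := Rs) (K := bnd Rs Is s) (D := fun x y => y ∈ reachN Rs x n)
      (fun p v h => bnd_rule h) (fun x => mem_reachN.2 ⟨0, by omega, rfl⟩)
      (fun p v h => mem_reachN.2 ⟨1, hn, v, ⟨p, v, [], h, by simp, by simp⟩, rfl⟩)
      (fun x y z h => by
        obtain ⟨i, hi, h⟩ := mem_reachN.1 h
        exact mem_reachN.2 ⟨i, hi, h.ctx z⟩)
      (fun x y z hx hy hz h1 h2 => hcl x (mem_wordsLE.2 hx) y (mem_wordsLE.2 hy) h1 z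
        (mem_wordsLE.2 hz) h2) m s [] w s bnd_s (bnd_int hwI) (by simpa using bnd_s)
        (mem_reachN.2 ⟨0, by omega, rfl⟩) (by simpa using hw)
    simpa using this
  · refine pump_conv (a := a) (q := y.drop a.length) (r := w.drop a.length) ?_ ?_ ?_
    · rw [haw]; exact reach_of_mem hw
    · rw [hay]; exact reach_of_mem hy
    · intro h
      have := congrArg List.length h
      simp at this; omega

theorem chkNeg_sound {Rs Is s n} (h : chkNeg Rs Is s n) : ¬ WExt Rs Is s := by
  rintro ⟨h1, h2⟩
  rcases h with ⟨i, hi, hr⟩ | h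
  · exact h1 i (reach_of_mem hr) hi
  · have hall : ∀ w, PReach Rs s w → w ∈ reachN Rs s n := fun w hw =>
      PReach.induct (mem_reachN.2 ⟨0, by omega, rfl⟩)
        (fun x y _ hst hx => h x hx y (mem_succs.2 hst)) hw
    obtain ⟨w, hw, hlen⟩ := h2 ((reachN Rs s n).flatMap id).length.succ
    have := length_le_flatMap (f := id) (hall w hw)
    simp only [id] at this
    omega

theorem chk_complete (Rs Is s) : ∃ n, chkPos Rs Is s n ∨ chkNeg Rs Is s n := by
  by_cases h1 : ∀ w, PReach Rs s w → w ∉ Is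
  swap
  · push Not at h1
    obtain ⟨w, hw, hI⟩ := h1
    obtain ⟨n, hn⟩ := (reach_eventually hw).exists
    exact ⟨n, .inr (.inl ⟨w, hI, hn⟩)⟩
  by_cases h2 : ∀ n, ∃ w, PReach Rs s w ∧ n ≤ w.length
  · obtain ⟨a, q, r, haK, har, haq, hq⟩ := pump (K := bnd Rs Is s)
      (fun p v h => (bnd_rule h).2) bnd_s h2
    have hfin : {l : List Bool | l.length ≤ bnd Rs Is s}.Finite := List.finite_length_le Bool _
    have hev : ∀ᶠ n in Filter.atTop, ∀ x ∈ {l : List Bool | l.length ≤ bnd Rs Is s},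
        ∀ y ∈ {l : List Bool | l.length ≤ bnd Rs Is s}, PReach Rs x y → y ∈ reachN Rs x n := by
      rw [Filter.eventually_all_finite hfin]
      intro x _
      rw [Filter.eventually_all_finite hfin]
      intro y _
      by_cases h : PReach Rs x y
      · filter_upwards [reach_eventually h] with n hn _ using hn
      · exact Filter.Eventually.of_forall fun n h' => absurd h' h
    obtain ⟨n, ⟨⟨hn1, hn2⟩, hn3⟩, hn4⟩ := (((hev.and (Filter.eventually_ge_atTop 1)).and
      (reach_eventually har)).and (reach_eventually haq)).exists
    refine ⟨n, .inl ⟨hn2, ?_, ?_, a, mem_wordsLE.2 haK, ⟨_, hn3, by simp⟩, _, hn4, by simp, ?_⟩⟩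
    · intro x hx y _ hxy z hz hyz
      exact hn1 x (mem_wordsLE.1 hx) z (mem_wordsLE.1 hz)
        ((reach_of_mem hxy).trans (reach_of_mem hyz))
    · exact fun i hi h => h1 i (reach_of_mem h) hi
    · have := List.length_pos_iff.2 hq
      simp; omega
  · push Not at h2
    obtain ⟨N, hN⟩ := h2
    have hfin : {l : List Bool | l.length ≤ N}.Finite := List.finite_length_le Bool _
    have hev : ∀ᶠ n in Filter.atTop, ∀ y ∈ {l : List Bool | l.length ≤ N},
        PReach Rs s y → y ∈ reachN Rs s n := by
      rw [Filter.eventually_all_finite hfin]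
      intro y _
      by_cases h : PReach Rs s y
      · filter_upwards [reach_eventually h] with n hn _ using hn
      · exact Filter.Eventually.of_forall fun n h' => absurd h' h
    obtain ⟨n, hn⟩ := hev.exists
    refine ⟨n, .inr (.inr ?_)⟩
    intro w hw y hy
    have hr : PReach Rs s y := (reach_of_mem hw).trans (.single (mem_succs.1 hy))
    exact hn y (hN y hr).le hr

/-! ### Normal forms as trees -/

/-- Trees with words at the leaves (words reversed: the head acts first). -/
inductive WTree : Type
  | leaf : List Bool → WTree
  | node : WTree → WTree → WTree

/-- Action of a word on a tree. -/
def act : List Bool → WTree → WTree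
  | w, .leaf v => .leaf (v ++ w)
  | [], .node x y => .node x y
  | true :: w, .node x _ => act w x
  | false :: w, .node _ y => act w y

theorem act_leaf (w v) : act w (.leaf v) = .leaf (v ++ w) := by
  cases w <;> simp [act]

theorem act_nil (T) : act [] T = T := by
  cases T <;> simp [act]

/-- Composition of trees. -/
def tmul : WTree → WTree → WTree
  | .leaf w, T => act w T
  | .node x y, T => .node (tmul x T) (tmul y T)

theorem act_append (v w T) : act (v ++ w) T = act w (act v T) := by
  induction T generalizing v with
  | leaf u => simp [act_leaf]
  | node x y hx hy =>
    cases v with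
    | nil => simp [act_nil]
    | cons b v => cases b <;> simp [act, hx, hy]

theorem tmul_act (w A B) : tmul (act w A) B = act w (tmul A B) := by
  induction A generalizing w with
  | leaf u => simp [act_leaf, tmul, act_append]
  | node x y hx hy =>
    rcases w with _ | ⟨_ | _, w⟩
    · simp [act_nil]
    · simp [act, tmul, hy]
    · simp [act, tmul, hx]

theorem tmul_assoc (A B C) : tmul (tmul A B) C = tmul A (tmul B C) := by
  induction A with
  | leaf w => simp [tmul, tmul_act]
  | node x y hx hy => simp [tmul, hx, hy]

theorem tmul_one (A) : tmul A (.leaf []) = A := by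
  induction A with
  | leaf w => simp [tmul, act_leaf]
  | node x y hx hy => simp [tmul, hx, hy]

/-- Normal form of a term, as a tree. -/
def nfT : Term → WTree
  | Term.I => .leaf []
  | Term.L => .leaf [true]
  | Term.R => .leaf [false]
  | Term.comp a b => tmul (nfT a) (nfT b)
  | Term.pair a b => .node (nfT a) (nfT b)

theorem AssocEq.nfT_eq {a b} (h : AssocEq a b) : nfT a = nfT b := by
  induction h with
  | assoc a b c => simp [nfT, tmul_assoc]
  | refl => rfl
  | symm _ ih => exact ih.symm
  | trans _ _ h1 h2 => exact h1.trans h2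
  | comp_congr _ _ h1 h2 => simp [nfT, h1, h2]
  | pair_congr _ _ h1 h2 => simp [nfT, h1, h2]

theorem Step.nfT_eq {a b} (h : Step rules15 a b) : nfT a = nfT b := by
  induction h with
  | rule hn hr =>
    cases hr with
    | r6 => simp [rules15] at hn
    | r7 => simp [rules15] at hn
    | _ => simp [nfT, tmul, act, act_nil, tmul_one]
  | _ => simp [nfT, *]

theorem Red.nfT_eq {a b} (h : Red rules15 a b) : nfT a = nfT b := by
  obtain ⟨c, h1, h2⟩ := h
  rw [← h2.nfT_eq]
  clear h2
  induction h1 with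
  | refl => rfl
  | tail _ hs ih =>
    obtain ⟨a', b', h3, h4, h5⟩ := hs
    rw [ih, h3.nfT_eq, h4.nfT_eq, h5.nfT_eq]

/-- A convenient presentation of rewriting. -/
def Rd (a b : Term) : Prop := Relation.ReflTransGen (fun x y => AssocEq x y ∨ Step rules15 x y) a b

theorem Rd.red {a b} (h : Rd a b) : Red rules15 a b := by
  induction h with
  | refl => exact ⟨a, .refl, .refl _⟩
  | tail _ hs ih =>
    obtain ⟨c, h1, h2⟩ := ih
    rcases hs with h | h
    · exact ⟨c, h1, h2.trans h⟩
    · exact ⟨_, h1.tail ⟨_, _, h2, h, .refl _⟩, .refl _⟩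

theorem Rd.refl (a) : Rd a a := Relation.ReflTransGen.refl
theorem Rd.trans {a b c} (h : Rd a b) (h' : Rd b c) : Rd a c := Relation.ReflTransGen.trans h h'
theorem Rd.ofAssoc {a b} (h : AssocEq a b) : Rd a b := Relation.ReflTransGen.single (.inl h)
theorem Rd.ofStep {a b} (h : Step rules15 a b) : Rd a b := Relation.ReflTransGen.single (.inr h)
theorem Rd.ofRule {n a b} (h : Rule n a b) (hn : 1 ≤ n ∧ n ≤ 5) : Rd a b := .ofStep (.rule hn h)

theorem Rd.comp {a a' b b'} (h : Rd a a') (h' : Rd b b') :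
    Rd (Term.comp a b) (Term.comp a' b') := by
  refine Rd.trans (b := Term.comp a' b) ?_ ?_
  · exact Relation.ReflTransGen.lift (r := fun x y => AssocEq x y ∨ Step rules15 x y)
      (p := fun x y => AssocEq x y ∨ Step rules15 x y) (fun x => Term.comp x b) (fun x y hxy =>
      Or.imp (fun h => .comp_congr h (.refl _)) (fun h => .comp_left h) hxy) _ _ h
  · exact Relation.ReflTransGen.lift (r := fun x y => AssocEq x y ∨ Step rules15 x y)
      (p := fun x y => AssocEq x y ∨ Step rules15 x y) (fun x => Term.comp a' x) (fun x y hxy =>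
      Or.imp (fun h => .comp_congr (.refl _) h) (fun h => .comp_right h) hxy) _ _ h'

theorem Rd.pair {a a' b b'} (h : Rd a a') (h' : Rd b b') :
    Rd (Term.pair a b) (Term.pair a' b') := by
  refine Rd.trans (b := Term.pair a' b) ?_ ?_
  · exact Relation.ReflTransGen.lift (r := fun x y => AssocEq x y ∨ Step rules15 x y)
      (p := fun x y => AssocEq x y ∨ Step rules15 x y) (fun x => Term.pair x b) (fun x y hxy =>
      Or.imp (fun h => .pair_congr h (.refl _)) (fun h => .pair_left h) hxy) _ _ h
  · exact Relation.ReflTransGen.lift (r := fun x y => AssocEq x y ∨ Step rules15 x y)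
      (p := fun x y => AssocEq x y ∨ Step rules15 x y) (fun x => Term.pair a' x) (fun x y hxy =>
      Or.imp (fun h => .pair_congr (.refl _) h) (fun h => .pair_right h) hxy) _ _ h'

/-- A letter as a term. -/
def letter : Bool → Term
  | true => Term.L
  | false => Term.R

/-- A (reversed) word as a term. -/
def wterm : List Bool → Term
  | [] => Term.I
  | [b] => letter b
  | b :: c :: w => Term.comp (wterm (c :: w)) (letter b)

/-- A tree as a term. -/
def toTerm : WTree → Term
  | .leaf w => wterm w
  | .node x y => Term.pair (toTerm x) (toTerm y)

theorem wterm_cons {w} (h : w ≠ []) (b) : wterm (b :: w) = Term.comp (wterm w) (letter b) := by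
  cases w with
  | nil => exact absurd rfl h
  | cons c w => rfl

theorem Rd.wterm_append (w v) : Rd (Term.comp (wterm w) (wterm v)) (wterm (v ++ w)) := by
  induction v with
  | nil => exact .ofRule (.r5 _) (by omega)
  | cons b v ih =>
    cases v with
    | nil =>
      cases w with
      | nil => exact .ofRule (.r4 _) (by omega)
      | cons c w => exact .refl _
    | cons c v =>
      rw [wterm_cons (w := c :: v) (by simp), List.cons_append,
        wterm_cons (w := c :: v ++ w) (by simp)]
      exact (Rd.ofAssoc (AssocEq.assoc _ _ _).symm).trans (ih.comp (.refl _))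

theorem Rd.letter_pair (b x y) :
    Rd (Term.comp (letter b) (Term.pair x y)) (if b then x else y) := by
  cases b
  · exact .ofRule (.r2 _ _) (by omega)
  · exact .ofRule (.r1 _ _) (by omega)

theorem Rd.act_tree (w T) : Rd (Term.comp (wterm w) (toTerm T)) (toTerm (act w T)) := by
  induction T generalizing w with
  | leaf v => rw [act_leaf]; exact .wterm_append w v
  | node x y hx hy =>
    rcases w with _ | ⟨b, w⟩
    · exact .ofRule (.r4 _) (by omega)
    · have h1 : Rd (Term.comp (wterm (b :: w)) (toTerm (.node x y)))
          (Term.comp (wterm w) (if b then toTerm x else toTerm y)) ∨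
          w = [] := by
        by_cases hw : w = []
        · exact .inr hw
        · rw [wterm_cons hw]
          exact .inl ((Rd.ofAssoc (AssocEq.assoc _ _ _)).trans ((Rd.refl _).comp (.letter_pair _ _ _)))
      rcases h1 with h1 | rfl
      · cases b
        · exact h1.trans (hy w)
        · exact h1.trans (hx w)
      · cases b
        · simpa [act, act_nil, toTerm, wterm] using Rd.letter_pair false (toTerm x) (toTerm y)
        · simpa [act, act_nil, toTerm, wterm] using Rd.letter_pair true (toTerm x) (toTerm y)

theorem Rd.mul_tree (A T) : Rd (Term.comp (toTerm A) (toTerm T)) (toTerm (tmul A T)) := by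
  induction A with
  | leaf w => exact .act_tree w T
  | node x y hx hy => exact (Rd.ofRule (.r3 _ _ _) (by omega)).trans (hx.pair hy)

theorem Rd.nf (X) : Rd X (toTerm (nfT X)) := by
  induction X with
  | I => exact .refl _
  | L => exact .refl _
  | R => exact .refl _
  | comp a b ha hb => exact (ha.comp hb).trans (.mul_tree _ _)
  | pair a b ha hb => exact ha.pair hb

/-- Nonempty products of letters. -/
def isW : Term → Prop
  | Term.I => False
  | Term.L => True
  | Term.R => True
  | Term.comp a b => isW a ∧ isW b
  | Term.pair _ _ => False

theorem AssocEq.isW_iff {a b} (h : AssocEq a b) : isW a ↔ isW b := by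
  induction h with
  | assoc a b c => simp [isW, and_assoc]
  | refl => rfl
  | symm _ ih => exact ih.symm
  | trans _ _ h1 h2 => exact h1.trans h2
  | comp_congr _ _ h1 h2 => simp [isW, h1, h2]
  | pair_congr _ _ h1 h2 => simp [isW]

theorem AssocEq.I_iff {a b} (h : AssocEq a b) : a = Term.I ↔ b = Term.I := by
  induction h with
  | refl => rfl
  | symm _ ih => exact ih.symm
  | trans _ _ h1 h2 => exact h1.trans h2
  | _ => simp

theorem isW.not_step {a b} (h : isW a) : ¬ Step rules15 a b := by
  intro hs
  induction hs with
  | rule hn hr => cases hr <;> simp [isW] at h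
  | comp_left _ ih => exact ih h.1
  | comp_right _ ih => exact ih h.2
  | pair_left _ ih => exact h
  | pair_right _ ih => exact h

theorem isW_wterm {w} (h : w ≠ []) : isW (wterm w) := by
  induction w with
  | nil => exact absurd rfl h
  | cons b w ih =>
    have hb : isW (letter b) := by cases b <;> trivial
    cases w with
    | nil => exact hb
    | cons c w => exact ⟨ih (by simp), hb⟩

theorem nf_wterm (w) : NF rules15 (wterm w) := by
  rintro b ⟨a', b', h1, h2, -⟩
  cases w with
  | nil =>
    have := h1.I_iff.1 rfl
    subst this
    cases h2 with
    | rule hn hr => cases hr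
  | cons c w => exact isW.not_step (h1.isW_iff.1 (isW_wterm (by simp))) h2

theorem isShift_wterm (w) : IsShift (wterm w) := by
  induction w with
  | nil => exact .unit
  | cons b w ih =>
    have hb : IsShift (letter b) := by cases b; exacts [.right, .left]
    cases w with
    | nil => exact hb
    | cons c w => exact .comp ih hb

theorem lenLR_wterm (w) : lenLR (wterm w) = w.length := by
  induction w with
  | nil => rfl
  | cons b w ih =>
    have hb : lenLR (letter b) = 1 := by cases b <;> rfl
    cases w with
    | nil => exact hb
    | cons c w => simp only [wterm, lenLR, ih, hb]; rfl

theorem AssocEq.lenLR_eq {a b} (h : AssocEq a b) : lenLR a = lenLR b := by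
  induction h with
  | assoc a b c => simp [lenLR, add_assoc]
  | refl => rfl
  | symm _ ih => exact ih.symm
  | trans _ _ h1 h2 => exact h1.trans h2
  | comp_congr _ _ h1 h2 => simp [lenLR, h1, h2]
  | pair_congr _ _ h1 h2 => simp [lenLR, h1, h2]

theorem NF.assoc_nf {t} (h : NF rules15 t) : AssocEq t (toTerm (nfT t)) := by
  obtain ⟨c, h1, h2⟩ := (Rd.nf t).red
  rcases Relation.ReflTransGen.cases_head h1 with rfl | ⟨d, hd, -⟩
  · exact h2
  · exact absurd hd (h d)

/-- Word, rules and interior nodes of a term. -/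
abbrev TData := List Bool × List (List Bool × List Bool) × List (List Bool)

/-- Prepend a letter to the rules. -/
def consR (b : Bool) (l : List (List Bool × List Bool)) : List (List Bool × List Bool) :=
  l.map fun pv => (b :: pv.1, pv.2)

/-- Data of the composition (meaningful for shifts). -/
def dComp (a b : TData) : TData := (b.1 ++ a.1, [([], b.1 ++ a.1)], [])
/-- Data of the pairing. -/
def dPair (a b : TData) : TData :=
  ([], consR true a.2.1 ++ consR false b.2.1,
    [] :: (a.2.2.map (List.cons true) ++ b.2.2.map (List.cons false)))
/-- Data of a word. -/
def dWord (w : List Bool) : TData := (w, [([], w)], [])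

/-- Data of a term. -/
def tdata : Term → TData
  | Term.I => dWord []
  | Term.L => dWord [true]
  | Term.R => dWord [false]
  | Term.comp a b => dComp (tdata a) (tdata b)
  | Term.pair a b => dPair (tdata a) (tdata b)

theorem AssocEq.tdata_eq {a b} (h : AssocEq a b) : tdata a = tdata b := by
  induction h with
  | assoc a b c => simp [tdata, dComp]
  | refl => rfl
  | symm _ ih => exact ih.symm
  | trans _ _ h1 h2 => exact h1.trans h2
  | comp_congr _ _ h1 h2 => simp [tdata, h1, h2]
  | pair_congr _ _ h1 h2 => simp [tdata, h1, h2]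

/-- Data of a tree. -/
def treeData : WTree → TData
  | .leaf w => dWord w
  | .node x y => dPair (treeData x) (treeData y)

theorem tdata_wterm (w) : tdata (wterm w) = dWord w := by
  induction w with
  | nil => rfl
  | cons b w ih =>
    have hb : tdata (letter b) = dWord [b] := by cases b <;> rfl
    cases w with
    | nil => exact hb
    | cons c w => simp only [wterm, tdata, ih, hb]; rfl

theorem tdata_toTerm (T) : tdata (toTerm T) = treeData T := by
  induction T with
  | leaf w => exact tdata_wterm w
  | node x y hx hy => simp [toTerm, tdata, treeData, hx, hy]

theorem NF.tdata_eq {t} (h : NF rules15 t) : tdata t = treeData (nfT t) := by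
  rw [h.assoc_nf.tdata_eq, tdata_toTerm]

theorem IsShift.nfT_eq {S} (h : IsShift S) : nfT S = .leaf (tdata S).1 := by
  induction h with
  | comp _ _ h1 h2 => simp [nfT, h1, h2, tmul, act_leaf, tdata, dComp]
  | _ => rfl

theorem act_eq_leaf {w w' T} : act w T = .leaf w' ↔
    ∃ p v r, (p, v) ∈ (treeData T).2.1 ∧ w = p ++ r ∧ w' = v ++ r := by
  induction T generalizing w with
  | leaf u =>
    simp only [act_leaf, treeData, dWord, WTree.leaf.injEq, List.mem_singleton, Prod.mk.injEq]
    constructor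
    · rintro rfl; exact ⟨[], u, w, ⟨rfl, rfl⟩, rfl, rfl⟩
    · rintro ⟨p, v, r, ⟨rfl, rfl⟩, rfl, rfl⟩; rfl
  | node x y hx hy =>
    rcases w with _ | ⟨b, w⟩
    · simp [act, treeData, dPair, consR]
    · cases b
      · simp only [act, hy, treeData, dPair, consR, List.mem_append, List.mem_map, Prod.exists,
          Prod.mk.injEq]
        constructor
        · rintro ⟨p, v, r, h, rfl, rfl⟩
          exact ⟨false :: p, v, r, .inr ⟨p, v, h, rfl, rfl⟩, rfl, rfl⟩
        · rintro ⟨p, v, r, ⟨p', v', h, rfl, rfl⟩ | ⟨p', v', h, rfl, rfl⟩, h1, rfl⟩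
          · simp at h1
          · simp at h1; exact ⟨p', _, r, h, h1, rfl⟩
      · simp only [act, hx, treeData, dPair, consR, List.mem_append, List.mem_map, Prod.exists,
          Prod.mk.injEq]
        constructor
        · rintro ⟨p, v, r, h, rfl, rfl⟩
          exact ⟨true :: p, v, r, .inl ⟨p, v, h, rfl, rfl⟩, rfl, rfl⟩
        · rintro ⟨p, v, r, ⟨p', v', h, rfl, rfl⟩ | ⟨p', v', h, rfl, rfl⟩, h1, rfl⟩
          · simp at h1; exact ⟨p', _, r, h, h1, rfl⟩
          · simp at h1

theorem act_eq_node {w T} : (∃ x y, act w T = .node x y) ↔ w ∈ (treeData T).2.2 := by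
  induction T generalizing w with
  | leaf u => simp [act_leaf, treeData, dWord]
  | node x y hx hy =>
    rcases w with _ | ⟨b, w⟩
    · simp [act, treeData, dPair]
    · cases b
      · simp [act, hy, treeData, dPair]
      · simp [act, hx, treeData, dPair]

/-- All rules of a list of terms. -/
def lrules : List Term → List (List Bool × List Bool)
  | [] => []
  | t :: l => (tdata t).2.1 ++ lrules l
/-- All interior nodes of a list of terms. -/
def lints : List Term → List (List Bool)
  | [] => []
  | t :: l => (tdata t).2.2 ++ lints l

theorem mem_lrules {B x} : x ∈ lrules B ↔ ∃ t ∈ B, x ∈ (tdata t).2.1 := by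
  induction B with
  | nil => simp [lrules]
  | cons t B ih => simp [lrules, ih]

theorem mem_lints {B x} : x ∈ lints B ↔ ∃ t ∈ B, x ∈ (tdata t).2.2 := by
  induction B with
  | nil => simp [lints]
  | cons t B ih => simp [lints, ih]

section

theorem step_iff {B : List Term} (hB : ∀ t ∈ B, NF rules15 t) {w w'} : PStep (lrules B) w w' ↔ ∃ t ∈ B, act w (nfT t) = .leaf w' := by
  simp only [PStep, mem_lrules, act_eq_leaf]
  constructor
  · rintro ⟨p, v, r, ⟨t, ht, h⟩, rfl, rfl⟩
    exact ⟨t, ht, p, v, r, (hB t ht).tdata_eq ▸ h, rfl, rfl⟩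
  · rintro ⟨t, ht, p, v, r, h, rfl, rfl⟩
    exact ⟨p, v, r, ⟨t, ht, (hB t ht).tdata_eq ▸ h⟩, rfl, rfl⟩

theorem int_iff {B : List Term} (hB : ∀ t ∈ B, NF rules15 t) {w} : w ∈ lints B ↔ ∃ t ∈ B, ∃ x y, act w (nfT t) = .node x y := by
  simp only [mem_lints, act_eq_node]
  constructor
  · rintro ⟨t, ht, h⟩; exact ⟨t, ht, (hB t ht).tdata_eq ▸ h⟩
  · rintro ⟨t, ht, h⟩; exact ⟨t, ht, (hB t ht).tdata_eq ▸ h⟩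

theorem act_cons (w : List Bool) (t l) : act w (nfT (listProd (t :: l))) =
    tmul (act w (nfT t)) (nfT (listProd l)) := by
  rw [tmul_act]; rfl

theorem reach_iff {B : List Term} (hB : ∀ t ∈ B, NF rules15 t) {w w'} : PReach (lrules B) w w' ↔
    ∃ l : List Term, (∀ t ∈ l, t ∈ B) ∧ act w (nfT (listProd l)) = .leaf w' := by
  constructor
  · rintro ⟨n, h⟩
    induction n generalizing w with
    | zero => cases h; exact ⟨[], by simp, by simp [listProd, nfT, act_leaf]⟩
    | succ n ih =>
      obtain ⟨z, h1, h2⟩ := h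
      obtain ⟨t, ht, h1⟩ := (step_iff hB).1 h1
      obtain ⟨l, hl, h2⟩ := ih h2
      refine ⟨t :: l, by simpa using ⟨ht, hl⟩, ?_⟩
      rw [act_cons, h1]; exact h2
  · rintro ⟨l, hl, h⟩
    induction l generalizing w with
    | nil => simp [listProd, nfT, act_leaf] at h; subst h; exact .refl _
    | cons t l ih =>
      rw [act_cons] at h
      cases hc : act w (nfT t) with
      | node x y => rw [hc] at h; simp [tmul] at h
      | leaf w1 =>
        rw [hc] at h
        exact (PReach.single ((step_iff hB).2 ⟨t, hl t (by simp), hc⟩)).trans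
          (ih (fun t ht => hl t (by simp [ht])) h)

theorem bad_iff {B : List Term} (hB : ∀ t ∈ B, NF rules15 t) {w} : (∃ w', PReach (lrules B) w w' ∧ w' ∈ lints B) ↔
    ∃ l : List Term, (∀ t ∈ l, t ∈ B) ∧ ∃ x y, act w (nfT (listProd l)) = .node x y := by
  constructor
  · rintro ⟨w', ⟨n, h⟩, hi⟩
    induction n generalizing w with
    | zero =>
      cases h
      obtain ⟨t, ht, x, y, h⟩ := (int_iff hB).1 hi
      exact ⟨[t], by simpa using ht, _, _, by rw [act_cons, h]; rfl⟩
    | succ n ih =>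
      obtain ⟨z, h1, h2⟩ := h
      obtain ⟨t, ht, h1⟩ := (step_iff hB).1 h1
      obtain ⟨l, hl, x, y, h2⟩ := ih h2
      refine ⟨t :: l, by simpa using ⟨ht, hl⟩, x, y, ?_⟩
      rw [act_cons, h1]; exact h2
  · rintro ⟨l, hl, x, y, h⟩
    induction l generalizing w with
    | nil => simp [listProd, nfT, act_leaf] at h
    | cons t l ih =>
      rw [act_cons] at h
      cases hc : act w (nfT t) with
      | node x y => exact ⟨w, .refl _, (int_iff hB).2 ⟨t, hl t (by simp), x, y, hc⟩⟩
      | leaf w1 =>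
        rw [hc] at h
        obtain ⟨w', h1, h2⟩ := ih (fun t ht => hl t (by simp [ht])) h
        exact ⟨w', (PReach.single ((step_iff hB).2 ⟨t, hl t (by simp), hc⟩)).trans h1, h2⟩

theorem extenuative_iff {B : List Term} (hB : ∀ t ∈ B, NF rules15 t) {S} (hS : IsShift S) :
    Extenuative B S ↔ WExt (lrules B) (lints B) (tdata S).1 := by
  have hnf : ∀ l, nfT (Term.comp S (listProd l)) = act (tdata S).1 (nfT (listProd l)) := by
    intro l; simp [nfT, hS.nfT_eq, tmul]
  have hsh : ∀ X, nfIsShift X ↔ ∃ w, nfT X = .leaf w := by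
    intro X
    constructor
    · rintro ⟨N, h1, -, h3⟩
      exact ⟨_, h1.nfT_eq.trans h3.nfT_eq⟩
    · rintro ⟨w, h⟩
      have := (Rd.nf X).red
      rw [h] at this
      exact ⟨_, this, nf_wterm w, isShift_wterm w⟩
  have hbad : BadFor B S ↔ ∀ w, PReach (lrules B) (tdata S).1 w → w ∉ lints B := by
    rw [← not_iff_not]
    push Not
    rw [bad_iff hB]
    simp only [BadFor, hsh, hnf]
    push Not
    refine exists_congr fun l => and_congr_right fun _ => ?_
    cases act (tdata S).1 (nfT (listProd l)) <;> simp
  unfold Extenuative WExt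
  rw [hbad]
  refine and_congr_right fun hb => forall_congr' fun n => ?_
  constructor
  · rintro ⟨l, hl, N, h1, h2, h3⟩
    obtain ⟨w, hw⟩ := (hsh _).1 (hbad.2 hb l hl)
    refine ⟨w, (reach_iff hB).2 ⟨l, hl, by rw [← hnf, hw]⟩, ?_⟩
    have h4 := h2.assoc_nf.lenLR_eq
    rw [← h1.nfT_eq, hw] at h4
    simp only [toTerm, lenLR_wterm] at h4
    omega
  · rintro ⟨w, hw, hn⟩
    obtain ⟨l, hl, h⟩ := (reach_iff hB).1 hw
    have := (Rd.nf (Term.comp S (listProd l))).red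
    rw [hnf, h] at this
    exact ⟨l, hl, wterm w, this, nf_wterm w, by rwa [lenLR_wterm]⟩

end

/-! ### Computability -/

/-- Decoding terms. -/
def decTerm : ℕ → Term
  | 0 => Term.I
  | 1 => Term.L
  | 2 => Term.R
  | n + 3 =>
    have h1 : (n / 2).unpair.1 < n + 3 := by
      have := Nat.unpair_left_le (n / 2); omega
    have h2 : (n / 2).unpair.2 < n + 3 := by
      have := Nat.unpair_right_le (n / 2); omega
    if n % 2 = 0 then Term.comp (decTerm (n / 2).unpair.1) (decTerm (n / 2).unpair.2)
    else Term.pair (decTerm (n / 2).unpair.1) (decTerm (n / 2).unpair.2)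

theorem decTerm_encode (t : Term) : decTerm (encodeTerm t) = t := by
  induction t with
  | I => simp [encodeTerm, decTerm]
  | L => simp [encodeTerm, decTerm]
  | R => simp [encodeTerm, decTerm]
  | comp a b ha hb => simp [encodeTerm, decTerm, ha, hb]
  | pair a b ha hb =>
    have h1 : (2 * Nat.pair (encodeTerm a) (encodeTerm b) + 1) / 2 =
      Nat.pair (encodeTerm a) (encodeTerm b) := by omega
    have h2 : (2 * Nat.pair (encodeTerm a) (encodeTerm b) + 1) % 2 = 1 := by omega
    rw [encodeTerm, show 2 * Nat.pair (encodeTerm a) (encodeTerm b) + 4 =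
      (2 * Nat.pair (encodeTerm a) (encodeTerm b) + 1) + 3 from rfl, decTerm]
    simp [h1, h2, ha, hb]

/-- Decoding lists of terms. -/
def decList : ℕ → List Term
  | 0 => []
  | n + 1 =>
    have h2 : n.unpair.2 < n + 1 := by
      have := Nat.unpair_right_le n; omega
    decTerm n.unpair.1 :: decList n.unpair.2

theorem decList_encode (l : List Term) : decList (encodeTermList l) = l := by
  induction l with
  | nil => simp [encodeTermList, decList]
  | cons a l ih => simp [encodeTermList, decList, ih, decTerm_encode]

theorem primrec_consR (b : Bool) : Primrec (consR b) :=
  Primrec.list_map Primrec.id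
    ((Primrec.list_cons.comp (Primrec.const b) (Primrec.fst.comp Primrec.snd)).pair
      (Primrec.snd.comp Primrec.snd)).to₂

theorem primrec_mapCons (b : Bool) : Primrec (fun l : List (List Bool) => l.map (List.cons b)) :=
  Primrec.list_map Primrec.id (Primrec.list_cons.comp (Primrec.const b) Primrec.snd).to₂

theorem primrec_dWord : Primrec dWord :=
  Primrec.id.pair ((Primrec.list_cons.comp ((Primrec.const []).pair Primrec.id)
    (Primrec.const [])).pair (Primrec.const []))

theorem primrec_dComp : Primrec₂ dComp :=
  (primrec_dWord.comp (Primrec.list_append.comp (Primrec.fst.comp Primrec.snd)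
    (Primrec.fst.comp Primrec.fst))).to₂

theorem primrec_dPair : Primrec₂ dPair := by
  have h1 : Primrec fun x : TData × TData => x.1.2.1 := Primrec.fst.comp (Primrec.snd.comp Primrec.fst)
  have h2 : Primrec fun x : TData × TData => x.1.2.2 := Primrec.snd.comp (Primrec.snd.comp Primrec.fst)
  have h3 : Primrec fun x : TData × TData => x.2.2.1 := Primrec.fst.comp (Primrec.snd.comp Primrec.snd)
  have h4 : Primrec fun x : TData × TData => x.2.2.2 := Primrec.snd.comp (Primrec.snd.comp Primrec.snd)
  exact ((Primrec.const []).pair ((Primrec.list_append.comp ((primrec_consR true).comp h1)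
    ((primrec_consR false).comp h3)).pair (Primrec.list_cons.comp (Primrec.const [])
      (Primrec.list_append.comp ((primrec_mapCons true).comp h2)
        ((primrec_mapCons false).comp h4))))).to₂

/-- Course-of-values step for terms. -/
def stepT (H : List TData) : TData :=
  if H.length = 0 then dWord [] else if H.length = 1 then dWord [true]
  else if H.length = 2 then dWord [false]
  else if (H.length - 3) % 2 = 0 then
    dComp (H.getD ((H.length - 3) / 2).unpair.1 (dWord []))
      (H.getD ((H.length - 3) / 2).unpair.2 (dWord []))
  else
    dPair (H.getD ((H.length - 3) / 2).unpair.1 (dWord []))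
      (H.getD ((H.length - 3) / 2).unpair.2 (dWord []))

theorem primrec_stepT : Primrec stepT := by
  have hl : Primrec fun H : List TData => H.length := Primrec.list_length
  have hm : Primrec fun H : List TData => ((H.length - 3) / 2).unpair :=
    Primrec.unpair.comp (Primrec.nat_div.comp (Primrec.nat_sub.comp hl (Primrec.const 3))
      (Primrec.const 2))
  have h1 := (Primrec.list_getD (dWord [])).comp Primrec.id (Primrec.fst.comp hm)
  have h2 := (Primrec.list_getD (dWord [])).comp Primrec.id (Primrec.snd.comp hm)
  have heq : ∀ k, PrimrecPred fun H : List TData => H.length = k := fun k =>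
    Primrec.eq.comp hl (Primrec.const k)
  exact Primrec.ite (heq 0) (Primrec.const _) <| Primrec.ite (heq 1) (Primrec.const _) <|
    Primrec.ite (heq 2) (Primrec.const _) <| Primrec.ite
      (Primrec.eq.comp (Primrec.nat_mod.comp (Primrec.nat_sub.comp hl (Primrec.const 3))
        (Primrec.const 2)) (Primrec.const 0)) (primrec_dComp.comp h1 h2) (primrec_dPair.comp h1 h2)

theorem primrec_tcode : Primrec fun n => tdata (decTerm n) := by
  have : Primrec₂ fun (_ : Unit) n => tdata (decTerm n) := by
    refine Primrec.nat_strong_rec _ (g := fun _ H => some (stepT H))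
      (Primrec.option_some.comp (primrec_stepT.comp Primrec.snd)).to₂ ?_
    intro _ n
    congr 1
    rcases n with _ | _ | _ | n
    · simp [stepT, decTerm, tdata]
    · simp [stepT, decTerm, tdata]
    · simp [stepT, decTerm, tdata]
    · have h1 : (n / 2).unpair.1 < n + 3 := by
        have := Nat.unpair_left_le (n / 2); omega
      have h2 : (n / 2).unpair.2 < n + 3 := by
        have := Nat.unpair_right_le (n / 2); omega
      have e1 : n + 1 + 1 + 1 = n + 3 := rfl
      rw [e1, decTerm]
      by_cases h : n % 2 = 0
      · simp [stepT, h, h1, h2, tdata]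
      · simp [stepT, h, h1, h2, tdata]
  exact this.comp (Primrec.const ()) Primrec.id

/-- Rules and interior nodes of lists. -/
abbrev LData := List (List Bool × List Bool) × List (List Bool)

/-- Course-of-values step for lists. -/
def stepL (H : List LData) : LData :=
  if H.length = 0 then ([], [])
  else
    ((tdata (decTerm (H.length - 1).unpair.1)).2.1 ++ (H.getD (H.length - 1).unpair.2 ([], [])).1,
     (tdata (decTerm (H.length - 1).unpair.1)).2.2 ++ (H.getD (H.length - 1).unpair.2 ([], [])).2)

theorem primrec_stepL : Primrec stepL := by
  have hl : Primrec fun H : List LData => H.length := Primrec.list_length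
  have hm : Primrec fun H : List LData => (H.length - 1).unpair :=
    Primrec.unpair.comp (Primrec.nat_sub.comp hl (Primrec.const 1))
  have h1 := primrec_tcode.comp (Primrec.fst.comp hm)
  have h2 := (Primrec.list_getD (([], []) : LData)).comp Primrec.id (Primrec.snd.comp hm)
  exact Primrec.ite (Primrec.eq.comp hl (Primrec.const 0)) (Primrec.const _)
    ((Primrec.list_append.comp (Primrec.fst.comp (Primrec.snd.comp h1)) (Primrec.fst.comp h2)).pair
      (Primrec.list_append.comp (Primrec.snd.comp (Primrec.snd.comp h1)) (Primrec.snd.comp h2)))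

theorem primrec_lcode : Primrec fun n => ((lrules (decList n), lints (decList n)) : LData) := by
  have : Primrec₂ fun (_ : Unit) n => ((lrules (decList n), lints (decList n)) : LData) := by
    refine Primrec.nat_strong_rec _ (g := fun _ H => some (stepL H))
      (Primrec.option_some.comp (primrec_stepL.comp Primrec.snd)).to₂ ?_
    intro _ n
    congr 1
    rcases n with _ | n
    · simp [stepL, decList, lrules, lints]
    · have h2 : n.unpair.2 < n + 1 := by
        have := Nat.unpair_right_le n; omega
      simp [stepL, decList, lrules, lints, h2]
  exact this.comp (Primrec.const ()) Primrec.id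

section
variable {α β : Type} [Primcodable α] [Primcodable β]

theorem pred_forall_mem {f : α → List β} {p : α → β → Prop} (hf : Primrec f)
    (hp : PrimrecPred fun x : α × β => p x.1 x.2) : PrimrecPred fun a => ∀ b ∈ f a, p a b := by
  have h : PrimrecRel fun (b : β) (a : α) => p a b :=
    PrimrecPred.comp (p := fun x : α × β => p x.1 x.2) hp (Primrec.snd.pair Primrec.fst)
  exact (PrimrecRel.forall_mem_list h).comp hf Primrec.id

theorem pred_exists_mem {f : α → List β} {p : α → β → Prop} (hf : Primrec f)
    (hp : PrimrecPred fun x : α × β => p x.1 x.2) : PrimrecPred fun a => ∃ b ∈ f a, p a b := by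
  have h : PrimrecRel fun (b : β) (a : α) => p a b :=
    PrimrecPred.comp (p := fun x : α × β => p x.1 x.2) hp (Primrec.snd.pair Primrec.fst)
  exact (PrimrecRel.exists_mem_list h).comp hf Primrec.id

theorem pred_imp {p q : α → Prop} (hp : PrimrecPred p) (hq : PrimrecPred q) :
    PrimrecPred fun a => p a → q a :=
  (hp.not.or hq).of_eq fun a => by tauto

theorem pred_mem {f : α → List β} {g : α → β} (hf : Primrec f) (hg : Primrec g) :
    PrimrecPred fun a => g a ∈ f a := by
  classical
  exact (pred_exists_mem (p := fun a b => b = g a) hf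
    (Primrec.eq.comp Primrec.snd (hg.comp Primrec.fst))).of_eq fun a => by simp

theorem primrec_succs {f : α → List (List Bool × List Bool)} {g : α → List Bool}
    (hf : Primrec f) (hg : Primrec g) : Primrec fun a => succs (f a) (g a) := by
  have hp : Primrec fun x : α × (List Bool × List Bool) => x.2.1 := Primrec.fst.comp Primrec.snd
  have hv : Primrec fun x : α × (List Bool × List Bool) => x.2.2 := Primrec.snd.comp Primrec.snd
  have hw : Primrec fun x : α × (List Bool × List Bool) => g x.1 := hg.comp Primrec.fst
  have hd := Primrec.list_drop.comp (Primrec.list_length.comp hp) hw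
  exact Primrec.list_flatMap hf (Primrec.ite (Primrec.eq.comp (Primrec.list_append.comp hp hd) hw)
    (Primrec.list_cons.comp (Primrec.list_append.comp hv hd) (Primrec.const []))
    (Primrec.const [])).to₂

theorem primrec_reachN {f : α → List (List Bool × List Bool)} {g : α → List Bool} {n : α → ℕ}
    (hf : Primrec f) (hg : Primrec g) (hn : Primrec n) :
    Primrec fun a => reachN (f a) (g a) (n a) := by
  refine Primrec.nat_iterate hn (Primrec.list_cons.comp hg (Primrec.const [])) ?_
  exact (Primrec.list_cons.comp (hg.comp Primrec.fst) (Primrec.list_flatMap Primrec.snd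
    (primrec_succs (hf.comp (Primrec.fst.comp Primrec.fst)) Primrec.snd).to₂)).to₂

theorem primrec_wordsLE : Primrec wordsLE := by
  refine Primrec.nat_iterate Primrec.id (Primrec.const _) ?_
  exact (Primrec.list_cons.comp (Primrec.const []) (Primrec.list_append.comp
    ((primrec_mapCons true).comp Primrec.snd) ((primrec_mapCons false).comp Primrec.snd))).to₂

theorem primrec_bnd {f : α → List (List Bool × List Bool)} {h : α → List (List Bool)}
    {g : α → List Bool}
    (hf : Primrec f) (hh : Primrec h) (hg : Primrec g) : Primrec fun a => bnd (f a) (h a) (g a) :=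
  Primrec.list_length.comp (Primrec.list_append.comp
    (Primrec.list_flatMap hf (Primrec.list_append.comp (Primrec.fst.comp Primrec.snd)
      (Primrec.snd.comp Primrec.snd)).to₂)
    (Primrec.list_append.comp (Primrec.list_flatMap hh Primrec.snd.to₂) hg))

theorem pred_chkNeg {f : α → List (List Bool × List Bool)} {h : α → List (List Bool)}
    {g : α → List Bool} {n : α → ℕ}
    (hf : Primrec f) (hh : Primrec h) (hg : Primrec g) (hn : Primrec n) :
    PrimrecPred fun a => chkNeg (f a) (h a) (g a) (n a) := by
  have hr := primrec_reachN hf hg hn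
  refine PrimrecPred.or ?_ ?_
  · exact pred_exists_mem hh (pred_mem (hr.comp Primrec.fst) Primrec.snd)
  · exact pred_forall_mem hr (pred_forall_mem (primrec_succs (hf.comp Primrec.fst) Primrec.snd)
      (pred_mem (hr.comp (Primrec.fst.comp Primrec.fst)) Primrec.snd))

theorem pred_chkPos {f : α → List (List Bool × List Bool)} {h : α → List (List Bool)}
    {g : α → List Bool} {n : α → ℕ}
    (hf : Primrec f) (hh : Primrec h) (hg : Primrec g) (hn : Primrec n) :
    PrimrecPred fun a => chkPos (f a) (h a) (g a) (n a) := by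
  have hr := primrec_reachN hf hg hn
  have hw := primrec_wordsLE.comp (primrec_bnd hf hh hg)
  have pre : ∀ {γ : Type} [Primcodable γ] {u v : γ → List Bool}, Primrec u → Primrec v →
      PrimrecPred fun c => u c ++ (v c).drop (u c).length = v c := fun hu hv =>
    Primrec.eq.comp (Primrec.list_append.comp hu
      (Primrec.list_drop.comp (Primrec.list_length.comp hu) hv)) hv
  refine PrimrecPred.and (Primrec.nat_le.comp (Primrec.const 1) hn) (PrimrecPred.and ?_
    (PrimrecPred.and ?_ ?_))
  · refine pred_forall_mem hw (pred_forall_mem (hw.comp Primrec.fst) (pred_imp ?_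
      (pred_forall_mem (hw.comp (Primrec.fst.comp Primrec.fst)) (pred_imp ?_ ?_))))
    · exact pred_mem (primrec_reachN (hf.comp (Primrec.fst.comp Primrec.fst))
        (Primrec.snd.comp Primrec.fst) (hn.comp (Primrec.fst.comp Primrec.fst))) Primrec.snd
    · exact pred_mem (primrec_reachN (hf.comp (Primrec.fst.comp (Primrec.fst.comp Primrec.fst)))
        (Primrec.snd.comp Primrec.fst) (hn.comp (Primrec.fst.comp (Primrec.fst.comp Primrec.fst))))
        Primrec.snd
    · exact pred_mem (primrec_reachN (hf.comp (Primrec.fst.comp (Primrec.fst.comp Primrec.fst)))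
        (Primrec.snd.comp (Primrec.fst.comp Primrec.fst))
        (hn.comp (Primrec.fst.comp (Primrec.fst.comp Primrec.fst)))) Primrec.snd
  · exact pred_forall_mem hh (pred_mem (hr.comp Primrec.fst) Primrec.snd).not
  · refine pred_exists_mem hw (PrimrecPred.and ?_ ?_)
    · exact pred_exists_mem (hr.comp Primrec.fst) (pre (Primrec.snd.comp Primrec.fst) Primrec.snd)
    · refine pred_exists_mem (primrec_reachN (hf.comp Primrec.fst) Primrec.snd
        (hn.comp Primrec.fst)) (PrimrecPred.and (pre (Primrec.snd.comp Primrec.fst) Primrec.snd) ?_)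
      exact Primrec.nat_lt.comp (Primrec.list_length.comp (Primrec.snd.comp Primrec.fst))
        (Primrec.list_length.comp Primrec.snd)

end

open Classical in
theorem wext_computable {f : ℕ → List (List Bool × List Bool)} {h : ℕ → List (List Bool)}
    {g : ℕ → List Bool} (hf : Primrec f) (hh : Primrec h) (hg : Primrec g) :
    Computable fun a => decide (WExt (f a) (h a) (g a)) := by
  have hF : Primrec₂ fun (a n : ℕ) => if chkPos (f a) (h a) (g a) n then some true
      else if chkNeg (f a) (h a) (g a) n then some false else none := by
    have f1 := hf.comp (Primrec.fst (α := ℕ) (β := ℕ))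
    have h1 := hh.comp (Primrec.fst (α := ℕ) (β := ℕ))
    have g1 := hg.comp (Primrec.fst (α := ℕ) (β := ℕ))
    exact (Primrec.ite (pred_chkPos f1 h1 g1 Primrec.snd) (Primrec.const _)
      (Primrec.ite (pred_chkNeg f1 h1 g1 Primrec.snd) (Primrec.const _) (Primrec.const _))).to₂
  refine (Partrec.rfindOpt hF.to_comp).of_eq_tot fun a => ?_
  have hdom : (Nat.rfindOpt fun n => if chkPos (f a) (h a) (g a) n then some true
      else if chkNeg (f a) (h a) (g a) n then some false else none).Dom := by
    rw [Nat.rfindOpt_dom]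
    obtain ⟨n, hn⟩ := chk_complete (f a) (h a) (g a)
    by_cases hp : chkPos (f a) (h a) (g a) n
    · exact ⟨n, true, by simp [hp]⟩
    · exact ⟨n, false, by simp [hp, hn.resolve_left hp]⟩
  obtain ⟨b, hb⟩ := Part.dom_iff_mem.1 hdom
  obtain ⟨n, hn⟩ := Nat.rfindOpt_spec hb
  have : decide (WExt (f a) (h a) (g a)) = b := by
    split_ifs at hn with h1 h2
    · simp at hn; subst hn; simpa using chkPos_sound h1
    · simp at hn; subst hn; simpa using chkNeg_sound h2
    · simp at hn
  rw [this]
  exact hb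

/-- It is decidable, given a finite set `B` of terms in CQ normal form and a
shift `S`, whether `S` is extenuative for `B`. -/
theorem extenuative_decidable :
    ∃ f : ℕ → Bool, Computable f ∧
      ∀ (B : List Term) (S : Term), (∀ t ∈ B, NF rules15 t) → IsShift S →
        (f (Nat.pair (encodeTermList B) (encodeTerm S)) = true ↔
          Extenuative B S) := by
  classical
  have h1 := primrec_lcode.comp (Primrec.fst.comp Primrec.unpair)
  have h2 := primrec_tcode.comp (Primrec.snd.comp Primrec.unpair)
  refine ⟨_, wext_computable (Primrec.fst.comp h1) (Primrec.snd.comp h1) (Primrec.fst.comp h2), ?_⟩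
  intro B S hB hS
  simp only [Nat.unpair_pair, decList_encode, decTerm_encode, decide_eq_true_eq]
  exact (extenuative_iff hB hS).symm
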